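/- Suppose (a) for every φ ∈ Φ, the integrands ℓ(φ(x),y), g_i(φ(x),y) (i=1,…,I) and h_j(φ(x),y) (j=1,…,J) are integrable with respect to D, P_i and Q_j respectively; (b) Φ is decomposable; (c) P*_φ > −∞; (d) the marginals on X of D, P₁,…,P_I, Q₁,…,Q_J are atomless; and (e) there exists ξ > 0 such that the ball {c ∈ ℝ^{I+J} : ‖c‖ ≤ ξ} is contained in the interior of the functional constraint epigraph C_φ. Then the functional problem is strongly dual, P*_φ = D*_φ, and the set Opt(D_φ) of dual maximizers is nonempty. -/

import Mathlib

open MeasureTheory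

/-- A (positive) measure is atomless: every measurable set of nonzero measure has a
measurable subset whose measure is neither `0` nor the full measure. -/
def MeasureAtomless {α : Type*} [MeasurableSpace α] (μ : Measure α) : Prop :=
  ∀ A : Set α, MeasurableSet A → μ A ≠ 0 →
    ∃ B ⊆ A, MeasurableSet B ∧ μ B ≠ 0 ∧ μ B ≠ μ A

namespace FSD

open MeasureTheory Set Filter Topology

/-- real-valued form of atomlessness -/
def AL {X : Type*} [MeasurableSpace X] (μ : Measure X) : Prop :=
  ∀ A : Set X, MeasurableSet A → 0 < μ.real A →
    ∃ B ⊆ A, MeasurableSet B ∧ 0 < μ.real B ∧ μ.real B < μ.real A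

/-- finitely additive and absolutely continuous set functions -/
structure Good {X : Type*} [MeasurableSpace X] (μ : Measure X) (ν : Set X → ℝ) : Prop where
  add : ∀ A B, MeasurableSet A → MeasurableSet B → Disjoint A B → ν (A ∪ B) = ν A + ν B
  ac : ∀ ε > 0, ∃ δ > 0, ∀ A, MeasurableSet A → μ.real A < δ → |ν A| < ε

variable {X : Type*} [MeasurableSpace X] {μ : Measure X}

lemma Good.diff {ν : Set X → ℝ} (h : Good μ ν) {A B : Set X} (hA : MeasurableSet A)
    (hB : MeasurableSet B) (hAB : B ⊆ A) : ν (A \ B) = ν A - ν B := by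
  have := h.add B (A \ B) hB (hA.diff hB) disjoint_sdiff_right
  rw [union_sdiff_cancel hAB] at this
  linarith

lemma good_self [IsFiniteMeasure μ] : Good μ μ.real where
  add A B hA hB hd := measureReal_union hd hB
  ac ε hε := ⟨ε, hε, fun A _ h => by rwa [abs_of_nonneg measureReal_nonneg]⟩

lemma small [IsFiniteMeasure μ] (hμ : AL μ) {A : Set X} (hA : MeasurableSet A)
    (h0 : 0 < μ.real A) (n : ℕ) :
    ∃ B ⊆ A, MeasurableSet B ∧ 0 < μ.real B ∧ μ.real B ≤ μ.real A / 2 ^ n := by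
  induction n with
  | zero => exact ⟨A, subset_rfl, hA, h0, by simp⟩
  | succ n ih =>
    obtain ⟨B, hBA, hB, hB0, hBn⟩ := ih
    obtain ⟨C, hCB, hC, hC0, hCl⟩ := hμ B hB hB0
    have hd := (good_self (μ := μ)).diff hB hC hCB
    have e : μ.real A / 2 ^ (n+1) = μ.real A / 2 ^ n / 2 := by rw [pow_succ, div_div]
    rcases le_total (μ.real C) (μ.real B / 2) with h | h
    · exact ⟨C, hCB.trans hBA, hC, hC0, by rw [e]; linarith⟩
    · exact ⟨B \ C, sdiff_subset.trans hBA, hB.diff hC, by linarith, by rw [e]; linarith⟩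

lemma exists_eq [IsFiniteMeasure μ] (hμ : AL μ) {A : Set X} (hA : MeasurableSet A) {c : ℝ}
    (hc0 : 0 ≤ c) (hc : c ≤ μ.real A) : ∃ B ⊆ A, MeasurableSet B ∧ μ.real B = c := by
  let S : Set (Set X) := {B | MeasurableSet B ∧ B ⊆ A ∧ μ.real B ≤ c}
  have step : ∀ B : S, ∃ B' : S, (B : Set X) ⊆ B' ∧
      ∀ C ∈ S, (B : Set X) ⊆ C → μ.real C + μ.real B ≤ 2 * μ.real B' := by
    intro B
    let T : Set ℝ := {r | ∃ C ∈ S, (B : Set X) ⊆ C ∧ r = μ.real C}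
    have hbd : BddAbove T := ⟨c, by rintro _ ⟨C, hC, _, rfl⟩; exact hC.2.2⟩
    have hmem : μ.real B ∈ T := ⟨B, B.2, subset_rfl, rfl⟩
    have hle : ∀ C ∈ S, (B : Set X) ⊆ C → μ.real C ≤ sSup T :=
      fun C hC hBC => le_csSup hbd ⟨C, hC, hBC, rfl⟩
    rcases eq_or_lt_of_le (hle B B.2 subset_rfl) with h | h
    · exact ⟨B, subset_rfl, fun C hC hBC => by linarith [hle C hC hBC]⟩
    · obtain ⟨_, ⟨C', hC', hBC', rfl⟩, hlt⟩ :=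
        exists_lt_of_lt_csSup ⟨_, hmem⟩ (show (sSup T + μ.real B) / 2 < sSup T by linarith)
      exact ⟨⟨C', hC'⟩, hBC', fun C hC hBC => by
        have := hle C hC hBC
        show _ ≤ 2 * μ.real C'
        linarith⟩
  choose F hF1 hF2 using step
  let s : ℕ → S := fun n => F^[n] ⟨∅, .empty, empty_subset _, by simpa using hc0⟩
  have hs : ∀ n, s (n+1) = F (s n) := fun n => Function.iterate_succ_apply' _ _ _
  have hmono : Monotone (fun n => (s n : Set X)) :=
    monotone_nat_of_le_succ fun n => by rw [hs]; exact hF1 _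
  let B := ⋃ n, (s n : Set X)
  have hBm : MeasurableSet B := .iUnion fun n => (s n).2.1
  have hBA : B ⊆ A := iUnion_subset fun n => (s n).2.2.1
  have hlim : Tendsto (fun n => μ.real (s n : Set X)) atTop (𝓝 (μ.real B)) :=
    (ENNReal.tendsto_toReal (measure_ne_top μ B)).comp (tendsto_measure_iUnion_atTop hmono)
  have hBc : μ.real B ≤ c := le_of_tendsto' hlim fun n => (s n).2.2.2
  refine ⟨B, hBA, hBm, le_antisymm hBc ?_⟩
  by_contra! hlt
  have hd := (good_self (μ := μ)).diff hA hBm hBA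
  obtain ⟨n, hn⟩ : ∃ n : ℕ, μ.real (A \ B) / (c - μ.real B) < 2 ^ n :=
    pow_unbounded_of_one_lt _ one_lt_two
  obtain ⟨C, hC, hCm, hC0, hCn⟩ := small hμ (hA.diff hBm) (by linarith) n
  have h1 : μ.real (A \ B) / 2 ^ n ≤ c - μ.real B := by
    rw [div_lt_iff₀ (by linarith)] at hn
    rw [div_le_iff₀ (by positivity)]
    linarith
  have hun : μ.real (B ∪ C) = μ.real B + μ.real C :=
    measureReal_union (disjoint_sdiff_right.mono_right hC) hCm
  have key : μ.real (B ∪ C) + μ.real B ≤ 2 * μ.real B := by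
    refine le_of_tendsto_of_tendsto' (tendsto_const_nhds.add hlim)
      ((hlim.comp (tendsto_add_atTop_nat 1)).const_mul 2) fun n => ?_
    simp only [Function.comp, hs]
    exact hF2 (s n) (B ∪ C) ⟨hBm.union hCm, union_subset hBA (hC.trans sdiff_subset), by linarith⟩
      ((subset_iUnion (fun n => (s n : Set X)) n).trans subset_union_left)
  linarith

/-- the halving property for a class of set functions -/
def Half (𝒞 : Set (Set X → ℝ)) : Prop :=
  ∀ A : Set X, MeasurableSet A → ∃ B ⊆ A, MeasurableSet B ∧ ∀ ν ∈ 𝒞, ν B = ν A / 2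

lemma half_base [IsFiniteMeasure μ] (hμ : AL μ) : Half {μ.real} := by
  intro A hA
  have : 0 ≤ μ.real A := measureReal_nonneg
  obtain ⟨B, h1, h2, h3⟩ := exists_eq hμ hA (c := μ.real A / 2) (by linarith) (by linarith)
  exact ⟨B, h1, h2, by rintro _ rfl; exact h3⟩

lemma chain [IsFiniteMeasure μ] {𝒞 : Set (Set X → ℝ)} (hg : ∀ ν ∈ 𝒞, Good μ ν)
    (hh : Half 𝒞) {A : Set X} (hA : MeasurableSet A) :
    ∃ Z : ℝ → Set X, (∀ t, 0 ≤ t → t ≤ 1 → MeasurableSet (Z t) ∧ Z t ⊆ A ∧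
        ∀ ν ∈ 𝒞, ν (Z t) = t * ν A) ∧
      ∀ s t, 0 ≤ s → s ≤ t → t ≤ 1 → Z s ⊆ Z t := by
  choose! H hH1 hH2 hH3 using hh
  let next : (ℕ → Set X) → (ℕ → Set X) := fun F j =>
    if j % 2 = 0 then F (j / 2) else F (j / 2) ∪ H (F (j / 2 + 1) \ F (j / 2))
  let F : ℕ → ℕ → Set X := fun k => next^[k] (fun j => if j = 0 then ∅ else A)
  have hFs : ∀ k, F (k+1) = next (F k) := fun k => Function.iterate_succ_apply' _ _ _
  have hev : ∀ k j, F (k+1) (2 * j) = F k j := by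
    intro k j
    rw [hFs]
    simp [next]
  have hod : ∀ k j, F (k+1) (2 * j + 1) = F k j ∪ H (F k (j+1) \ F k j) := by
    intro k j
    rw [hFs]
    have h1 : (2 * j + 1) % 2 ≠ 0 := by omega
    have h2 : (2 * j + 1) / 2 = j := by omega
    simp only [next, h2, if_neg h1]
  have hempty : ∀ ν ∈ 𝒞, ν ∅ = 0 := by
    intro ν hν
    have := (hg ν hν).add ∅ ∅ .empty .empty (by simp)
    simp at this
    exact this
  have hall : ∀ k, (∀ j, MeasurableSet (F k j) ∧ F k j ⊆ A) ∧ (∀ j, F k j ⊆ F k (j+1)) ∧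
      ∀ ν ∈ 𝒞, ∀ j ≤ 2 ^ k, ν (F k j) = j / 2 ^ k * ν A := by
    intro k
    induction k with
    | zero =>
      refine ⟨fun j => ?_, fun j => ?_, fun ν hν j hj => ?_⟩
      · by_cases h : j = 0 <;> simp [F, h, hA]
      · by_cases h : j = 0 <;> simp [F, h]
      · have : j = 0 ∨ j = 1 := by
          simp at hj; omega
        rcases this with rfl | rfl <;> simp [F, hempty ν hν]
    | succ k ih =>
      obtain ⟨ih1, ih2, ih3⟩ := ih
      have hdm : ∀ j, MeasurableSet (F k (j+1) \ F k j) := fun j => (ih1 _).1.diff (ih1 _).1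
      have hHs : ∀ j, H (F k (j+1) \ F k j) ⊆ F k (j+1) \ F k j := fun j => hH1 _ (hdm j)
      have hHm : ∀ j, MeasurableSet (H (F k (j+1) \ F k j)) := fun j => hH2 _ (hdm j)
      refine ⟨fun j => ?_, fun j => ?_, fun ν hν j hj => ?_⟩
      · rcases Nat.even_or_odd' j with ⟨i, rfl | rfl⟩
        · rw [hev]; exact ih1 i
        · rw [hod]
          exact ⟨(ih1 i).1.union (hHm i), union_subset (ih1 i).2
            ((hHs i).trans (sdiff_subset.trans (ih1 _).2))⟩
      · rcases Nat.even_or_odd' j with ⟨i, rfl | rfl⟩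
        · rw [hev, hod]; exact subset_union_left
        · rw [show 2 * i + 1 + 1 = 2 * (i + 1) by ring, hev, hod]
          exact union_subset (ih2 i) ((hHs i).trans sdiff_subset)
      · rcases Nat.even_or_odd' j with ⟨i, rfl | rfl⟩
        · rw [hev, ih3 ν hν i (by rw [pow_succ] at hj; omega)]
          push_cast
          field_simp
          ring
        · have hi : i + 1 ≤ 2 ^ k := by rw [pow_succ] at hj; omega
          rw [hod, (hg ν hν).add _ _ (ih1 i).1 (hHm i)
            (disjoint_sdiff_right.mono_right (hHs i)), hH3 _ (hdm i) ν hν,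
            (hg ν hν).diff (ih1 _).1 (ih1 _).1 (ih2 i), ih3 ν hν i (by omega),
            ih3 ν hν (i+1) hi]
          push_cast
          field_simp
          ring
  have hFmono : ∀ k, Monotone (F k) := fun k => monotone_nat_of_le_succ (hall k).2.1
  let fl : ℝ → ℕ → ℕ := fun t k => ⌊t * 2 ^ k⌋₊
  have hfl1 : ∀ t, 0 ≤ t → ∀ k, 2 * fl t k ≤ fl t (k+1) := by
    intro t ht k
    apply Nat.le_floor
    push_cast
    have := Nat.floor_le (show 0 ≤ t * 2 ^ k by positivity)
    rw [pow_succ]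
    simp only [fl]
    linarith
  let Z : ℝ → Set X := fun t => ⋃ k, F k (fl t k)
  have hZmono : ∀ t, 0 ≤ t → Monotone fun k => F k (fl t k) := by
    intro t ht
    apply monotone_nat_of_le_succ
    intro k
    rw [← hev]
    exact hFmono _ (hfl1 t ht k)
  refine ⟨Z, fun t ht0 ht1 => ?_, fun s t hs hst ht => ?_⟩
  · have hm : MeasurableSet (Z t) := .iUnion fun k => ((hall k).1 _).1
    refine ⟨hm, iUnion_subset fun k => ((hall k).1 _).2, fun ν hν => ?_⟩
    have hle : ∀ k, fl t k ≤ 2 ^ k := by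
      intro k
      apply Nat.floor_le_of_le
      push_cast
      have : (0:ℝ) < 2 ^ k := by positivity
      nlinarith
    have hfrac : Tendsto (fun k => (fl t k : ℝ) / 2 ^ k) atTop (𝓝 t) := by
      have := (tendsto_nat_floor_mul_div_atTop (R := ℝ) ht0).comp
        (tendsto_pow_atTop_atTop_of_one_lt (one_lt_two (α := ℝ)))
      simpa [Function.comp_def, fl] using this
    have hlimν : Tendsto (fun k => ν (F k (fl t k))) atTop (𝓝 (t * ν A)) := by
      have := hfrac.mul_const (ν A)
      refine this.congr fun k => ?_
      rw [(hall k).2.2 ν hν _ (hle k)]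
    have hlimμ : Tendsto (fun k => μ.real (F k (fl t k))) atTop (𝓝 (μ.real (Z t))) :=
      (ENNReal.tendsto_toReal (measure_ne_top μ _)).comp
        (tendsto_measure_iUnion_atTop (hZmono t ht0))
    refine tendsto_nhds_unique ?_ hlimν
    rw [Metric.tendsto_atTop]
    intro ε hε
    obtain ⟨δ, hδ, hac⟩ := (hg ν hν).ac ε hε
    obtain ⟨N, hN⟩ := Metric.tendsto_atTop.1 hlimμ δ hδ
    refine ⟨N, fun k hk => ?_⟩
    have hsub : F k (fl t k) ⊆ Z t := subset_iUnion (fun k => F k (fl t k)) k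
    have h1 := hac (Z t \ F k (fl t k)) (hm.diff ((hall k).1 _).1) (by
      rw [good_self.diff hm ((hall k).1 _).1 hsub]
      have := hN k hk
      rw [dist_comm, Real.dist_eq] at this
      exact (le_abs_self _).trans_lt this)
    rw [(hg ν hν).diff hm ((hall k).1 _).1 hsub] at h1
    rwa [dist_comm, Real.dist_eq]
  · refine iUnion_mono fun k => hFmono k (Nat.floor_mono ?_)
    gcongr

lemma half_insert [IsFiniteMeasure μ] {𝒞 : Set (Set X → ℝ)} (hg : ∀ ν ∈ 𝒞, Good μ ν)
    (hh : Half 𝒞) (hmem : μ.real ∈ 𝒞) {η : Set X → ℝ} (hη : Good μ η) :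
    Half (insert η 𝒞) := by
  intro A hA
  obtain ⟨Z, hZ, hZm⟩ := chain hg hh hA
  have hcont : ContinuousOn (fun t => η (Z t)) (Icc 0 1) := by
    rw [Metric.continuousOn_iff]
    intro b hb ε hε
    obtain ⟨δ, hδ, hac⟩ := hη.ac ε hε
    have key : ∀ s ∈ Icc (0:ℝ) 1, ∀ t ∈ Icc (0:ℝ) 1, s ≤ t → (t - s) * μ.real A < δ →
        |η (Z t) - η (Z s)| < ε := by
      intro s hs t ht hst hlt
      have hsub := hZm s t hs.1 hst ht.2
      obtain ⟨ms, -, vs⟩ := hZ s hs.1 hs.2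
      obtain ⟨mt, -, vt⟩ := hZ t ht.1 ht.2
      rw [← hη.diff mt ms hsub]
      apply hac _ (mt.diff ms)
      rw [good_self.diff mt ms hsub, vs _ hmem, vt _ hmem]
      linarith
    have hA0 : 0 ≤ μ.real A := measureReal_nonneg
    refine ⟨δ / (μ.real A + 1), by positivity, fun a ha hab => ?_⟩
    rw [Real.dist_eq, lt_div_iff₀ (by positivity)] at hab
    rw [Real.dist_eq]
    have habs := abs_nonneg (a - b)
    rcases le_total a b with h | h
    · rw [abs_sub_comm]
      refine key a ha b hb h ?_
      rw [abs_sub_comm, abs_of_nonneg (sub_nonneg.2 h)] at hab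
      nlinarith
    · refine key b hb a ha h ?_
      rw [abs_of_nonneg (sub_nonneg.2 h)] at hab
      nlinarith
  have hsubC : ∀ s ∈ Icc (0:ℝ) (1/2), ∀ ν, Good μ ν →
      ν (Z (s + 1/2) \ Z s) = ν (Z (s + 1/2)) - ν (Z s) := by
    intro s hs ν hν
    exact hν.diff (hZ _ (by linarith [hs.1]) (by linarith [hs.2])).1
      (hZ _ hs.1 (by linarith [hs.2])).1 (hZm _ _ hs.1 (by linarith) (by linarith [hs.2]))
  have hz0 : μ.real (Z 0) = 0 := by
    rw [(hZ 0 le_rfl zero_le_one).2.2 _ hmem]; simp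
  have hz1 : μ.real (A \ Z 1) = 0 := by
    obtain ⟨m, s, v⟩ := hZ 1 zero_le_one le_rfl
    rw [good_self.diff hA m s, v _ hmem]; simp
  have hnull : ∀ B, MeasurableSet B → μ.real B = 0 → η B = 0 := by
    intro B hB h0
    by_contra hne
    obtain ⟨δ, hδ, hac⟩ := hη.ac |η B| (abs_pos.2 hne)
    exact lt_irrefl _ (hac B hB (by rwa [h0]))
  have e0 : η (Z 0) = 0 := hnull _ (hZ 0 le_rfl zero_le_one).1 hz0
  have e1 : η (Z 1) = η A := by
    obtain ⟨m, s, v⟩ := hZ 1 zero_le_one le_rfl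
    have := hnull _ (hA.diff m) hz1
    rw [hη.diff hA m s] at this
    linarith
  let G : ℝ → ℝ := fun s => η (Z (s + 1/2)) - η (Z s)
  have hG : ContinuousOn G (Icc 0 (1/2)) := by
    refine ContinuousOn.sub ?_ ?_
    · refine hcont.comp (f := fun s : ℝ => s + 1/2) (by fun_prop) fun s hs => ?_
      exact ⟨by linarith [hs.1], by linarith [hs.2]⟩
    · exact hcont.mono fun s hs => ⟨hs.1, by linarith [hs.2]⟩
  have hG0 : G 0 = η (Z (1/2)) := by simp [G, e0]
  have hG1 : G (1/2) = η A - η (Z (1/2)) := by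
    simp only [G]; rw [← e1]; norm_num
  have hmid : η A / 2 ∈ uIcc (G 0) (G (1/2)) := by
    rw [hG0, hG1, mem_uIcc]
    rcases le_total (η (Z (1/2))) (η A / 2) with h | h
    · left; constructor <;> linarith
    · right; constructor <;> linarith
  rw [← uIcc_of_le (by norm_num : (0:ℝ) ≤ 1/2)] at hG
  obtain ⟨s, hs, hsv⟩ := intermediate_value_uIcc hG hmid
  rw [uIcc_of_le (by norm_num : (0:ℝ) ≤ 1/2)] at hs
  have hs' := hZ (s + 1/2) (by linarith [hs.1]) (by linarith [hs.2])
  have hs'' := hZ s hs.1 (by linarith [hs.2])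
  refine ⟨Z (s + 1/2) \ Z s, sdiff_subset.trans hs'.2.1, hs'.1.diff hs''.1, ?_⟩
  rintro ν (rfl | hν)
  · rw [hsubC s hs _ hη]; exact hsv
  · rw [hsubC s hs _ (hg ν hν), hs'.2.2 ν hν, hs''.2.2 ν hν]
    ring

/-- Lyapunov-type theorem along segments. -/
theorem lyapunov [IsFiniteMeasure μ] (hμ : AL μ) {𝒞 : Set (Set X → ℝ)} (hfin : 𝒞.Finite)
    (hg : ∀ ν ∈ 𝒞, Good μ ν) {t : ℝ} (h0 : 0 ≤ t) (h1 : t ≤ 1) :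
    ∃ Z, MeasurableSet Z ∧ ∀ ν ∈ 𝒞, ν Z = t * ν univ := by
  have : ∃ 𝒟 : Set (Set X → ℝ), 𝒞 ⊆ 𝒟 ∧ μ.real ∈ 𝒟 ∧ (∀ ν ∈ 𝒟, Good μ ν) ∧ Half 𝒟 := by
    induction 𝒞, hfin using Set.Finite.induction_on with
    | empty => exact ⟨{μ.real}, by simp, by simp, by rintro _ rfl; exact good_self, half_base hμ⟩
    | @insert η 𝒞 _ _ ih =>
      obtain ⟨𝒟, a, b, c, d⟩ := ih fun ν hν => hg ν (mem_insert_of_mem _ hν)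
      have hη := hg η (mem_insert _ _)
      exact ⟨insert η 𝒟, insert_subset_insert a, mem_insert_of_mem _ b,
        by rintro ν (rfl | hν); exacts [hη, c ν hν], half_insert c d b hη⟩
  obtain ⟨𝒟, a, b, c, d⟩ := this
  obtain ⟨Z, hZ, -⟩ := chain c d MeasurableSet.univ
  exact ⟨Z t, (hZ t h0 h1).1, fun ν hν => (hZ t h0 h1).2.2 ν (a hν)⟩


lemma good_int {Y : Type*} [MeasurableSpace Y] {m : Measure (X × Y)} [IsFiniteMeasure m]
    {f : X × Y → ℝ} (hf : Integrable f m)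
    (hle : ∀ Z, MeasurableSet Z → m.real (Prod.fst ⁻¹' Z) ≤ μ.real Z) :
    Good μ (fun Z => ∫ z in Prod.fst ⁻¹' Z, f z ∂m) where
  add A B hA hB hd := by
    rw [preimage_union]
    exact setIntegral_union (hd.preimage _) (measurable_fst hB) hf.integrableOn hf.integrableOn
  ac ε hε := by
    by_contra! hcon
    choose A hA1 hA2 hA3 using fun n : ℕ =>
      hcon (1 / ((n : ℝ) + 1)) (by positivity)
    have hreal : Tendsto (fun n => m.real (Prod.fst ⁻¹' (A n))) atTop (𝓝 0) :=
      squeeze_zero (fun n => measureReal_nonneg)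
        (fun n => (hle _ (hA1 n)).trans (hA2 n).le) tendsto_one_div_add_atTop_nhds_zero_nat
    have h0 : Tendsto (m ∘ fun n => Prod.fst ⁻¹' (A n)) atTop (𝓝 0) := by
      refine (ENNReal.tendsto_toReal_iff (fun n => measure_ne_top _ _) ENNReal.zero_ne_top).1 ?_
      simpa [Measure.real] using hreal
    have h1 := hf.tendsto_setIntegral_nhds_zero h0
    have h2 := h1.abs
    rw [abs_zero] at h2
    exact absurd (ge_of_tendsto' h2 hA3) (not_le.2 hε)

lemma mix {Y κ : Type*} [MeasurableSpace Y] [Fintype κ] (m : κ → Measure (X × Y))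
    [∀ k, IsProbabilityMeasure (m k)] (hat : ∀ k, MeasureAtomless ((m k).map Prod.fst))
    (f₁ f₂ : κ → X × Y → ℝ) (h₁ : ∀ k, Integrable (f₁ k) (m k))
    (h₂ : ∀ k, Integrable (f₂ k) (m k)) {t : ℝ} (ht0 : 0 ≤ t) (ht1 : t ≤ 1) :
    ∃ Z : Set X, MeasurableSet Z ∧ ∀ k, ∀ f : X × Y → ℝ, (∀ z, z.1 ∈ Z → f z = f₁ k z) →
      (∀ z, z.1 ∉ Z → f z = f₂ k z) →
      ∫ z, f z ∂(m k) = t * ∫ z, f₁ k z ∂(m k) + (1 - t) * ∫ z, f₂ k z ∂(m k) := by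
  let μ : Measure X := ∑ k, (m k).map Prod.fst
  have hfin : ∀ k, IsFiniteMeasure ((m k).map Prod.fst) := fun k => inferInstance
  have hμf : IsFiniteMeasure μ := by
    refine ⟨?_⟩
    simp only [μ, Measure.finsetSum_apply]
    exact ENNReal.sum_lt_top.2 fun k _ => measure_lt_top _ _
  have hle' : ∀ k Z, (m k).map Prod.fst Z ≤ μ Z := by
    intro k Z
    simp only [μ, Measure.finsetSum_apply]
    exact Finset.single_le_sum (f := fun k => (m k).map Prod.fst Z) (fun _ _ => zero_le)
      (Finset.mem_univ k)
  have hAL : AL μ := by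
    intro A hA h0
    have h0' : μ A ≠ 0 := fun h => by simp [Measure.real, h] at h0
    obtain ⟨k, hk⟩ : ∃ k, (m k).map Prod.fst A ≠ 0 := by
      by_contra! hcon
      apply h0'
      simp only [μ, Measure.finsetSum_apply, hcon, Finset.sum_const_zero]
    obtain ⟨B, hBA, hB, hB0, hBne⟩ := hat k A hA hk
    have pos : ∀ C, (m k).map Prod.fst C ≠ 0 → 0 < μ.real C := by
      intro C hC
      exact ENNReal.toReal_pos (fun h => hC (le_antisymm (h ▸ hle' k C) zero_le))
        (measure_ne_top _ _)
    refine ⟨B, hBA, hB, pos B hB0, ?_⟩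
    have := pos (A \ B) (by
      intro h
      apply hBne
      refine le_antisymm (measure_mono hBA) ?_
      have := measure_sdiff_le_iff_le_add (μ := (m k).map Prod.fst) hB.nullMeasurableSet hBA
        (measure_ne_top _ _) (ε := 0)
      simpa using this.1 h.le)
    rw [good_self.diff hA hB hBA] at this
    linarith
  have hle : ∀ k Z, MeasurableSet Z → (m k).real (Prod.fst ⁻¹' Z) ≤ μ.real Z := by
    intro k Z hZ
    have := hle' k Z
    rw [Measure.map_apply measurable_fst hZ] at this
    exact ENNReal.toReal_mono (measure_ne_top _ _) this
  obtain ⟨Z, hZ, hZν⟩ := lyapunov hAL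
    (𝒞 := range fun k => fun Z => ∫ z in Prod.fst ⁻¹' Z, (f₁ k z - f₂ k z) ∂(m k))
    (finite_range _) (by
      rintro _ ⟨k, rfl⟩
      exact good_int ((h₁ k).sub (h₂ k)) (hle k)) ht0 ht1
  refine ⟨Z, hZ, fun k f hf1 hf2 => ?_⟩
  have hm : MeasurableSet (Prod.fst ⁻¹' Z : Set (X × Y)) := measurable_fst hZ
  have e1 := hZν _ ⟨k, rfl⟩
  simp only [preimage_univ, Measure.restrict_univ] at e1
  rw [integral_sub (h₁ k) (h₂ k)] at e1
  have e2 : f = fun z => (Prod.fst ⁻¹' Z).indicator (fun z => f₁ k z - f₂ k z) z + f₂ k z := by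
    funext z
    by_cases hz : z.1 ∈ Z
    · rw [indicator_of_mem (show z ∈ Prod.fst ⁻¹' Z from hz), hf1 z hz]; ring
    · rw [indicator_of_notMem (show z ∉ Prod.fst ⁻¹' Z from hz), hf2 z hz]; ring
  have e3 : Integrable ((Prod.fst ⁻¹' Z).indicator (fun z => f₁ k z - f₂ k z)) (m k) :=
    ((h₁ k).sub (h₂ k)).indicator hm
  have e4 := integral_add e3 (h₂ k)
  rw [integral_indicator hm, e1] at e4
  rw [e2]
  refine e4.trans ?_
  ring

/-- Finite-dimensional separation. -/
lemma separation {I J : ℕ} {S : Set (ℝ × (Fin I → ℝ) × (Fin J → ℝ))} (hS : Convex ℝ S)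
    (hup : ∀ r u v r' u', (r, u, v) ∈ S → r ≤ r' → (∀ i, u i ≤ u' i) → (r', u', v) ∈ S)
    {N : Set ((Fin I → ℝ) × (Fin J → ℝ))} (hN : N ∈ 𝓝 0) (hNS : ∀ w ∈ N, ∃ r, (r, w) ∈ S)
    {p : ℝ} (hp : ∀ r, (r, 0, 0) ∈ S → p ≤ r) :
    ∃ lam : Fin I → ℝ, ∃ mu : Fin J → ℝ, (∀ i, 0 ≤ lam i) ∧
      ∀ r u v, (r, u, v) ∈ S → p ≤ r + ∑ i, lam i * u i + ∑ j, mu j * v j := by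
  obtain ⟨b, hb0, hbN⟩ := exists_mem_interior_convexHull_affineBasis hN
  have hfin := b.finite
  choose! ρ hρ using hNS
  obtain ⟨R, hR⟩ : ∃ R, ∀ i, ρ (b i) ≤ R := by
    obtain ⟨R, hR⟩ := (finite_range fun i => ρ (b i)).bddAbove
    exact ⟨R, fun i => hR ⟨i, rfl⟩⟩
  have hull : ∀ w ∈ convexHull ℝ (range b), (R, w) ∈ S := by
    have hc : Convex ℝ {w | (R, w) ∈ S} := by
      intro x hx y hy s t hs ht hst
      have := hS hx hy hs ht hst
      simp only [mem_ofPred_eq]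
      convert this using 1
      ext1
      · simp [← add_mul, hst]
      · rfl
    intro w hw
    refine convexHull_min ?_ hc hw
    rintro _ ⟨i, rfl⟩
    exact hup _ _ _ _ _ (hρ (b i) (hbN (subset_convexHull _ _ ⟨i, rfl⟩))) (hR i)
      fun _ => le_rfl
  have hint : ((R + 1, 0, 0) : ℝ × (Fin I → ℝ) × (Fin J → ℝ)) ∈ interior S := by
    have hsub : Ioi R ×ˢ interior (convexHull ℝ (range b)) ⊆ S := by
      rintro ⟨r, w⟩ ⟨hr, hw⟩
      exact hup _ _ _ _ _ (hull w (interior_subset hw)) (le_of_lt hr) fun _ => le_rfl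
    exact interior_maximal hsub (isOpen_Ioi.prod isOpen_interior) ⟨by simp, hb0⟩
  have hpn : ((p, 0, 0) : ℝ × (Fin I → ℝ) × (Fin J → ℝ)) ∉ interior S := by
    intro hmem
    have hc : Continuous fun r : ℝ => ((r, 0, 0) : ℝ × (Fin I → ℝ) × (Fin J → ℝ)) := by fun_prop
    have : ∀ᶠ r in 𝓝 p, ((r, 0, 0) : ℝ × (Fin I → ℝ) × (Fin J → ℝ)) ∈ S :=
      hc.continuousAt.eventually (mem_interior_iff_mem_nhds.1 hmem)
    obtain ⟨ε, hε, hball⟩ := Metric.eventually_nhds_iff.1 this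
    have := hp (p - ε / 2) (hball (by rw [Real.dist_eq]; rw [abs_lt]; constructor <;> linarith))
    linarith
  obtain ⟨f, hf⟩ := geometric_hahn_banach_open_point hS.interior isOpen_interior hpn
  have hfS : ∀ a ∈ S, f a ≤ f (p, 0, 0) := by
    intro a ha
    have h1 : a ∈ closure (interior S) := by
      rw [hS.closure_interior_eq_closure_of_nonempty_interior ⟨_, hint⟩]
      exact subset_closure ha
    exact closure_minimal (t := {a | f a ≤ f (p, 0, 0)}) (fun a ha => (hf a ha).le)
      (isClosed_le f.continuous continuous_const) h1
  set α : ℝ := f (1, 0, 0) with hα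
  let β : Fin I → ℝ := fun i => f (0, Pi.single i 1, 0)
  let γ : Fin J → ℝ := fun j => f (0, 0, Pi.single j 1)
  have hdec : ∀ r u v, f (r, u, v) = r * α + ∑ i, u i * β i + ∑ j, v j * γ j := by
    intro r u v
    have : ((r, u, v) : ℝ × (Fin I → ℝ) × (Fin J → ℝ)) = r • (1, 0, 0)
        + ∑ i, u i • ((0, Pi.single i 1, 0) : ℝ × (Fin I → ℝ) × (Fin J → ℝ))
        + ∑ j, v j • ((0, 0, Pi.single j 1) : ℝ × (Fin I → ℝ) × (Fin J → ℝ)) := by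
      ext x
      · simp [Prod.fst_sum]
      · simp [Prod.fst_sum, Prod.snd_sum, Finset.sum_apply, Pi.single_apply]
      · simp [Prod.fst_sum, Prod.snd_sum, Finset.sum_apply, Pi.single_apply]
    rw [this, map_add, map_add, map_sum, map_sum, map_smul]
    simp only [map_smul, smul_eq_mul, α, β, γ]
  have hint' := hf _ hint
  have hmem := interior_subset hint
  simp only [hdec, Pi.zero_apply, zero_mul, Finset.sum_const_zero, add_zero] at hint' hfS
  have hRp : p ≤ R + 1 := hp _ hmem
  have hαneg : α < 0 := by
    by_contra! h
    nlinarith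
  have hβ : ∀ i, β i ≤ 0 := by
    intro i
    by_contra! hpos
    let T := ((p - (R + 1)) * α + 1) / β i
    have hT : 0 ≤ T := by
      apply div_nonneg _ hpos.le
      nlinarith
    have h1 := hfS _ (hup _ _ _ (R + 1) (Pi.single i T) hmem le_rfl (fun k => by
      by_cases hk : k = i
      · subst hk; simpa using hT
      · simp [hk]))
    simp [Pi.single_apply] at h1
    have : T * β i = (p - (R + 1)) * α + 1 := div_mul_cancel₀ _ hpos.ne'
    linarith
  refine ⟨fun i => β i / α, fun j => γ j / α, fun i => div_nonneg_of_nonpos (hβ i) hαneg.le,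
    fun r u v hm => ?_⟩
  have h1 := hfS _ hm
  have e : r + ∑ i, β i / α * u i + ∑ j, γ j / α * v j
      = (r * α + ∑ i, u i * β i + ∑ j, v j * γ j) / α := by
    rw [add_div, add_div, Finset.sum_div, Finset.sum_div, mul_div_cancel_right₀ _ hαneg.ne]
    congr 2
    · congr 1; funext i; ring
    · funext j; ring
  rw [e, le_div_iff_of_neg hαneg]
  exact h1

end FSD

/-- functional strong duality: for a decomposable class `Φ`, integrable losses,
atomless marginals, `P*_φ > −∞` and `0` in the interior of the functional constraint
epigraph, the functional problem is strongly dual and the set of dual maximizers is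
nonempty.  This is expressed by the existence of multipliers `(λ*, μ*)` with `λ* ≥ 0` whose
dual-function value exists and equals `P*_φ`, while the dual-function value at any other
multipliers is at most `P*_φ`. -/
theorem functional_problem_strong_duality
    {X Y : Type*} [MeasurableSpace X] [MeasurableSpace Y]
    (K I J : ℕ)
    (D : Measure (X × Y)) [IsProbabilityMeasure D]
    (P : Fin I → Measure (X × Y)) [∀ i, IsProbabilityMeasure (P i)]
    (Q : Fin J → Measure (X × Y)) [∀ j, IsProbabilityMeasure (Q j)]
    (l : EuclideanSpace ℝ (Fin K) → Y → ℝ)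
    (g : Fin I → EuclideanSpace ℝ (Fin K) → Y → ℝ)
    (h : Fin J → EuclideanSpace ℝ (Fin K) → Y → ℝ)
    (hl : Measurable (Function.uncurry l))
    (hg : ∀ i, Measurable (Function.uncurry (g i)))
    (hh : ∀ j, Measurable (Function.uncurry (h j)))
    (Φ : Set (X → EuclideanSpace ℝ (Fin K)))
    (hΦmeas : ∀ φ ∈ Φ, Measurable φ)
    -- (a) integrability of all the integrands
    (hintl : ∀ φ ∈ Φ, Integrable (fun z : X × Y => l (φ z.1) z.2) D)
    (hintg : ∀ φ ∈ Φ, ∀ i, Integrable (fun z : X × Y => g i (φ z.1) z.2) (P i))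
    (hinth : ∀ φ ∈ Φ, ∀ j, Integrable (fun z : X × Y => h j (φ z.1) z.2) (Q j))
    -- (b) decomposability
    (hdec : ∀ φ₁ ∈ Φ, ∀ φ₂ ∈ Φ, ∀ Z : Set X, MeasurableSet Z →
      ∃ φ₃ ∈ Φ, (∀ x ∈ Z, φ₃ x = φ₁ x) ∧ ∀ x ∉ Z, φ₃ x = φ₂ x)
    -- (d) atomless X-marginals
    (hatomD : MeasureAtomless (D.map Prod.fst))
    (hatomP : ∀ i, MeasureAtomless ((P i).map Prod.fst))
    (hatomQ : ∀ j, MeasureAtomless ((Q j).map Prod.fst))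
    -- expected objective, constraint functionals and Lagrangian
    (obj : (X → EuclideanSpace ℝ (Fin K)) → ℝ)
    (hobj : ∀ φ, obj φ = ∫ z : X × Y, l (φ z.1) z.2 ∂D)
    (conG : Fin I → (X → EuclideanSpace ℝ (Fin K)) → ℝ)
    (hconG : ∀ i φ, conG i φ = ∫ z : X × Y, g i (φ z.1) z.2 ∂(P i))
    (conH : Fin J → (X → EuclideanSpace ℝ (Fin K)) → ℝ)
    (hconH : ∀ j φ, conH j φ = ∫ z : X × Y, h j (φ z.1) z.2 ∂(Q j))
    (Lag : (X → EuclideanSpace ℝ (Fin K)) → (Fin I → ℝ) → (Fin J → ℝ) → ℝ)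
    (hLag : ∀ φ lam mu, Lag φ lam mu = obj φ + ∑ i, lam i * conG i φ + ∑ j, mu j * conH j φ)
    -- the primal optimal value P*_φ
    (Pφ : ℝ)
    (hPφ : Pφ = sInf {r : ℝ | ∃ φ ∈ Φ, (∀ i, conG i φ ≤ 0) ∧ (∀ j, conH j φ = 0) ∧ r = obj φ})
    -- (c) P*_φ > −∞
    (hbdd : BddBelow {r : ℝ | ∃ φ ∈ Φ, (∀ i, conG i φ ≤ 0) ∧ (∀ j, conH j φ = 0) ∧ r = obj φ})
    -- (e) a ball around 0 inside the interior of the functional constraint epigraph C_φ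
    (hball : ∃ ξ > (0 : ℝ), Metric.closedBall (0 : (Fin I → ℝ) × (Fin J → ℝ)) ξ ⊆
      interior {uv : (Fin I → ℝ) × (Fin J → ℝ) |
        ∃ φ ∈ Φ, (∀ i, conG i φ ≤ uv.1 i) ∧ ∀ j, conH j φ = uv.2 j}) :
    ∃ lam : Fin I → ℝ, ∃ mu : Fin J → ℝ, (∀ i, 0 ≤ lam i) ∧
      IsGLB {r : ℝ | ∃ φ ∈ Φ, r = Lag φ lam mu} Pφ ∧
      ∀ lam' : Fin I → ℝ, ∀ mu' : Fin J → ℝ, (∀ i, 0 ≤ lam' i) →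
        ∀ b ∈ lowerBounds {r : ℝ | ∃ φ ∈ Φ, r = Lag φ lam' mu'}, b ≤ Pφ := by
  classical
  let m : Option (Fin I ⊕ Fin J) → Measure (X × Y) := fun k => k.elim D (Sum.elim P Q)
  let c : Option (Fin I ⊕ Fin J) → EuclideanSpace ℝ (Fin K) → Y → ℝ :=
    fun k => k.elim l (Sum.elim g h)
  have hm : ∀ k, IsProbabilityMeasure (m k) := by
    rintro (_ | i | j)
    · exact inferInstanceAs (IsProbabilityMeasure D)
    · exact inferInstanceAs (IsProbabilityMeasure (P i))
    · exact inferInstanceAs (IsProbabilityMeasure (Q j))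
  have hat : ∀ k, MeasureAtomless ((m k).map Prod.fst) := by
    rintro (_ | i | j)
    exacts [hatomD, hatomP i, hatomQ j]
  have hint : ∀ φ ∈ Φ, ∀ k, Integrable (fun z : X × Y => c k (φ z.1) z.2) (m k) := by
    rintro φ hφ (_ | i | j)
    exacts [hintl φ hφ, hintg φ hφ i, hinth φ hφ j]
  have hmix : ∀ φ₁ ∈ Φ, ∀ φ₂ ∈ Φ, ∀ t : ℝ, 0 ≤ t → t ≤ 1 → ∃ φ ∈ Φ,
      obj φ = t * obj φ₁ + (1 - t) * obj φ₂ ∧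
      (∀ i, conG i φ = t * conG i φ₁ + (1 - t) * conG i φ₂) ∧
      (∀ j, conH j φ = t * conH j φ₁ + (1 - t) * conH j φ₂) := by
    intro φ₁ h1 φ₂ h2 t ht0 ht1
    obtain ⟨Z, hZ, hZe⟩ := FSD.mix m hat _ _ (hint φ₁ h1) (hint φ₂ h2) ht0 ht1
    obtain ⟨φ, hφ, ha, hb⟩ := hdec φ₁ h1 φ₂ h2 Z hZ
    have key := fun k => hZe k (fun z => c k (φ z.1) z.2)
      (fun z hz => by simp only [ha z.1 hz]) (fun z hz => by simp only [hb z.1 hz])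
    refine ⟨φ, hφ, ?_, fun i => ?_, fun j => ?_⟩
    · simp only [hobj]; exact key none
    · simp only [hconG]; exact key (some (Sum.inl i))
    · simp only [hconH]; exact key (some (Sum.inr j))
  let S : Set (ℝ × (Fin I → ℝ) × (Fin J → ℝ)) :=
    {w | ∃ φ ∈ Φ, obj φ ≤ w.1 ∧ (∀ i, conG i φ ≤ w.2.1 i) ∧ ∀ j, conH j φ = w.2.2 j}
  have hS : Convex ℝ S := by
    rintro ⟨r₁, u₁, v₁⟩ ⟨φ₁, h1, a1, b1, c1⟩ ⟨r₂, u₂, v₂⟩ ⟨φ₂, h2, a2, b2, c2⟩ s t hs ht hst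
    obtain ⟨φ, hφ, e1, e2, e3⟩ := hmix φ₁ h1 φ₂ h2 s hs (by linarith)
    obtain rfl : t = 1 - s := by linarith
    dsimp only at a1 b1 c1 a2 b2 c2
    refine ⟨φ, hφ, ?_, fun i => ?_, fun j => ?_⟩
    · rw [e1]
      exact add_le_add (mul_le_mul_of_nonneg_left a1 hs) (mul_le_mul_of_nonneg_left a2 ht)
    · rw [e2]
      exact add_le_add (mul_le_mul_of_nonneg_left (b1 i) hs)
        (mul_le_mul_of_nonneg_left (b2 i) ht)
    · rw [e3, c1, c2]; rfl
  obtain ⟨ξ, hξ, hball⟩ := hball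
  have h0mem := hball (Metric.mem_closedBall_self hξ.le)
  have hweak : ∀ lam' : Fin I → ℝ, ∀ mu' : Fin J → ℝ, (∀ i, 0 ≤ lam' i) →
        ∀ b ∈ lowerBounds {r : ℝ | ∃ φ ∈ Φ, r = Lag φ lam' mu'}, b ≤ Pφ := by
    intro lam' mu' hlam b hb
    rw [hPφ]
    obtain ⟨φ₀, h0, hG0, hH0⟩ := interior_subset h0mem
    refine le_csInf ⟨_, φ₀, h0, fun i => hG0 i, fun j => hH0 j, rfl⟩ ?_
    rintro _ ⟨φ, hφ, hG, hH, rfl⟩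
    refine (hb ⟨φ, hφ, rfl⟩).trans ?_
    rw [hLag]
    have e1 : ∑ i, lam' i * conG i φ ≤ 0 :=
      Finset.sum_nonpos fun i _ => mul_nonpos_of_nonneg_of_nonpos (hlam i) (hG i)
    have e2 : ∑ j, mu' j * conH j φ = 0 :=
      Finset.sum_eq_zero fun j _ => by rw [hH j, mul_zero]
    linarith
  obtain ⟨lam, mu, hlam, hsep⟩ := FSD.separation hS
    (by
      rintro r u v r' u' ⟨φ, hφ, a, b, c⟩ hr hu
      exact ⟨φ, hφ, le_trans a hr, fun i => (b i).trans (hu i), c⟩)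
    (mem_interior_iff_mem_nhds.1 h0mem)
    (by
      rintro w ⟨φ, hφ, a, b⟩
      exact ⟨obj φ, φ, hφ, le_rfl, a, b⟩)
    (p := Pφ)
    (by
      rintro r ⟨φ, hφ, a, b, c⟩
      rw [hPφ]
      exact (csInf_le hbdd ⟨φ, hφ, fun i => b i, fun j => c j, rfl⟩).trans a)
  refine ⟨lam, mu, hlam, ⟨?_, hweak lam mu hlam⟩, hweak⟩
  rintro _ ⟨φ, hφ, rfl⟩
  rw [hLag]
  exact hsep (obj φ) (fun i => conG i φ) (fun j => conH j φ)
    ⟨φ, hφ, le_rfl, fun _ => le_rfl, fun _ => rfl⟩
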